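/- Let A generate an α-times resolvent family {S_α(t)}_{t≥0} on X, where 1 < α < 2, and let r > 0. If for every x, y ∈ D(A) and every continuous f : [0,r] → X, the function u(t) = S_α(t)x + ∫_0^t S_α(s)y ds + (P_α*f)(t) is a strong solution of D_t^α u = Au + f on [0,r] with u(0) = x, u'(0) = y, then S_α(·) is of bounded semivariation on [0,r]. -/

import Mathlib

open MeasureTheory Set

/-- `g β t = t^(β-1)/Γ(β)`. -/
noncomputable def g (β t : ℝ) : ℝ := t ^ (β - 1) / Real.Gamma β

/-- `Pa α S t x = (g_{α-1} * S)(t) x = ∫_0^t g_{α-1}(t-s) S(s) x ds`. -/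
noncomputable def Pa {X : Type*} [NormedAddCommGroup X] [NormedSpace ℂ X]
    (α : ℝ) (S : ℝ → X →L[ℂ] X) (t : ℝ) (x : X) : X :=
  ∫ s in (0:ℝ)..t, g (α - 1) (t - s) • S s x

/-- `G` is of bounded semivariation on `[0, r]`: the quantities
`‖∑ (G(d_{i+1}) - G(d_i)) x_i‖` over all partitions `0 = d_0 < ⋯ < d_n = r`
and all vectors of norm at most one are uniformly bounded. -/
def BoundedSemivariation {X : Type*} [NormedAddCommGroup X] [NormedSpace ℂ X]
    (G : ℝ → X →L[ℂ] X) (r : ℝ) : Prop :=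
  ∃ C : ℝ, ∀ (n : ℕ) (d : ℕ → ℝ) (x : ℕ → X),
    d 0 = 0 → d n = r → (∀ i < n, d i < d (i + 1)) → (∀ i, ‖x i‖ ≤ 1) →
    ‖∑ i ∈ Finset.range n, (G (d (i + 1)) - G (d i)) (x i)‖ ≤ C

/-- `u` is a strong solution of `D_t^α u = A u + f` on `[0, r]`, `u 0 = x`, `u' 0 = y`:
`u` takes values in `D(A)` with `t ↦ A u t` continuous (encoded via the graph of `A`),
`u` is continuously differentiable on `[0, r]`,
`w t = ∫_0^t g_{2-α}(t-s) (u s - x - s y) ds` is twice continuously differentiable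
on `[0, r]`, and `w'' t = A (u t) + f t` there. -/
def IsStrongSolution {X : Type*} [NormedAddCommGroup X] [NormedSpace ℂ X]
    (α : ℝ) (A : X →ₗ.[ℂ] X) (r : ℝ) (f : ℝ → X) (x y : X) (u : ℝ → X) : Prop :=
  ∃ Au u' w' w'' : ℝ → X,
    ContinuousOn u (Set.Icc 0 r) ∧
    (∀ t ∈ Set.Icc (0:ℝ) r, (u t, Au t) ∈ A.graph) ∧
    ContinuousOn Au (Set.Icc 0 r) ∧
    (∀ t ∈ Set.Icc (0:ℝ) r, HasDerivWithinAt u (u' t) (Set.Icc 0 r) t) ∧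
    ContinuousOn u' (Set.Icc 0 r) ∧
    (∀ t ∈ Set.Icc (0:ℝ) r,
      HasDerivWithinAt (fun τ => ∫ s in (0:ℝ)..τ, g (2 - α) (τ - s) • (u s - x - s • y))
        (w' t) (Set.Icc 0 r) t) ∧
    (∀ t ∈ Set.Icc (0:ℝ) r, HasDerivWithinAt w' (w'' t) (Set.Icc 0 r) t) ∧
    ContinuousOn w'' (Set.Icc 0 r) ∧
    (∀ t ∈ Set.Icc (0:ℝ) r, w'' t = Au t + f t) ∧
    u 0 = x ∧ u' 0 = y

/-!
By the closed graph theorem, as soon as `∫₀ʳ P_α(s) f(s) ds` lies in the domain of `A` for every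
continuous `f`, the map `T f = A ∫₀ʳ P_α(s) f(s) ds` is bounded for the supremum norm. Since
`A ∫₀ᵗ P_α(s) x ds = S_α(t) x - x`, applying `T` formally to the step function equal to `x_i` on
`(d_{i-1}, d_i]` gives `∑ (S_α(d_i) - S_α(d_{i-1})) x_i`. To stay within continuous functions, the
indicator of `(d, ∞)` is replaced by a ramp of width `ε`: these approximate step functions still
have norm at most `1`, and their images under `T` converge to the sum above as `ε → 0`, so that
`‖T‖` bounds the semivariation.
-/

open scoped Topology BoundedContinuousFunction

section StronglyContinuousFamilies

variable {𝕜 E F T : Type*} [NontriviallyNormedField 𝕜] [NormedAddCommGroup E] [NormedSpace 𝕜 E]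
  [NormedAddCommGroup F] [NormedSpace 𝕜 F] [TopologicalSpace T] {s : Set T} {P : T → E →L[𝕜] F}

lemma exists_norm_le_of_continuousOn_apply [CompleteSpace E] (hs : IsCompact s)
    (hP : ∀ x, ContinuousOn (fun t => P t x) s) : ∃ C, ∀ t ∈ s, ‖P t‖ ≤ C := by
  obtain ⟨C, hC⟩ : ∃ C, ∀ t : s, ‖P t‖ ≤ C := banach_steinhaus fun x =>
    let ⟨C, hC⟩ := hs.exists_bound_of_continuousOn (hP x)
    ⟨C, fun t => hC t t.2⟩
  exact ⟨C, fun t ht => hC ⟨t, ht⟩⟩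

lemma continuousOn_apply_of_continuousOn_apply_const [CompleteSpace E] (hs : IsCompact s)
    (hP : ∀ x, ContinuousOn (fun t => P t x) s) {f : T → E} (hf : ContinuousOn f s) :
    ContinuousOn (fun t => P t (f t)) s := by
  obtain ⟨C, hC⟩ := exists_norm_le_of_continuousOn_apply hs hP
  intro t ht
  have h_increment : Filter.Tendsto (fun v => P v (f v - f t)) (𝓝[s] t) (𝓝 0) := by
    have h_bound : Filter.Tendsto (fun v => C * ‖f v - f t‖) (𝓝[s] t) (𝓝 0) := by
      simpa using (tendsto_iff_norm_sub_tendsto_zero.1 (hf t ht)).const_mul C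
    refine squeeze_zero_norm' ?_ h_bound
    filter_upwards [self_mem_nhdsWithin] with v hv using (P v).le_of_opNorm_le (hC v hv) _
  simpa [ContinuousWithinAt] using h_increment.add (hP (f t) t ht)

lemma exists_clm_eq_intervalIntegral [NormedSpace ℝ F] [SMulCommClass ℝ 𝕜 F]
    {P : ℝ → E →L[𝕜] F} {φ : ℝ → ℝ} {a b : ℝ}
    (hP : ∀ x, IntervalIntegrable (fun s => P s x) volume a b)
    (hφ : IntervalIntegrable φ volume a b) (hPφ : ∀ s ∈ uIoc a b, ‖P s‖ ≤ φ s) :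
    ∃ L : E →L[𝕜] F, ∀ x, L x = ∫ s in a..b, P s x := by
  let L : E →ₗ[𝕜] F :=
    { toFun := fun x => ∫ s in a..b, P s x
      map_add' := fun x y => by simp [intervalIntegral.integral_add (hP x) (hP y)]
      map_smul' := fun c x => by simp [intervalIntegral.integral_smul] }
  refine ⟨L.mkContinuous |∫ s in a..b, φ s| fun x => ?_, fun x => rfl⟩
  calc ‖∫ s in a..b, P s x‖ ≤ |∫ s in a..b, φ s * ‖x‖| :=
        intervalIntegral.norm_integral_le_abs_of_norm_le
          ((ae_restrict_mem measurableSet_uIoc).mono fun s hs =>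
            (P s).le_of_opNorm_le (hPφ s hs) x) (hφ.mul_const _)
    _ = |∫ s in a..b, φ s| * ‖x‖ := by
        rw [intervalIntegral.integral_mul_const, abs_mul, abs_norm]

end StronglyContinuousFamilies

section ClosedOperators

variable {𝕜 E F Y : Type*} [NormedAddCommGroup E] [NormedAddCommGroup F] [NormedAddCommGroup Y]

lemma exists_clm_mem_graph [NontriviallyNormedField 𝕜] [NormedSpace 𝕜 E] [NormedSpace 𝕜 F]
    [NormedSpace 𝕜 Y] [CompleteSpace F] [CompleteSpace Y] {A : E →ₗ.[𝕜] F} (hA : A.IsClosed)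
    (K : Y →L[𝕜] E) (hK : ∀ y, K y ∈ A.domain) :
    ∃ L : Y →L[𝕜] F, ∀ y, (K y, L y) ∈ A.graph := by
  let L : Y →ₗ[𝕜] F := A.toFun ∘ₗ K.toLinearMap.codRestrict A.domain hK
  have hL : ∀ y, (K y, L y) ∈ A.graph := fun y => A.mem_graph ⟨K y, hK y⟩
  have h_graph : (L.graph : Set (Y × F)) = (fun p => (K p.1, p.2)) ⁻¹' (A.graph : Set (E × F)) := by
    ext ⟨y, z⟩
    simp only [SetLike.mem_coe, LinearMap.mem_graph_iff, mem_preimage]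
    exact ⟨fun hz => hz ▸ hL y, fun hz => A.mem_graph_snd_inj hz (hL y) rfl⟩
  exact ⟨.ofIsClosedGraph (g := L) (h_graph ▸ hA.preimage (by fun_prop)), hL⟩

variable [RCLike 𝕜] [NormedSpace 𝕜 E] [NormedSpace ℝ E] [CompleteSpace E]

lemma intervalIntegral_mem_of_isClosed {p : Submodule 𝕜 E} (hp : IsClosed (p : Set E)) {a b : ℝ}
    {u : ℝ → E} (hu : IntervalIntegrable u volume a b) (h : ∀ s ∈ uIoc a b, u s ∈ p) :
    ∫ s in a..b, u s ∈ p := by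
  rw [← Submodule.Quotient.mk_eq_zero]
  calc p.mkQL (∫ s in a..b, u s) = ∫ s in a..b, p.mkQL (u s) :=
        (p.mkQL.intervalIntegral_comp_comm hu).symm
    _ = 0 := intervalIntegral.integral_zero_ae
        (.of_forall fun s hs => (Submodule.Quotient.mk_eq_zero _).2 (h s hs))

lemma intervalIntegral_mem_graph [NormedSpace 𝕜 F] [NormedSpace ℝ F] [CompleteSpace F]
    {A : E →ₗ.[𝕜] F} (hA : A.IsClosed)
    {a b : ℝ} {u : ℝ → E} {v : ℝ → F} (hu : IntervalIntegrable u volume a b)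
    (hv : IntervalIntegrable v volume a b) (h : ∀ s ∈ uIoc a b, (u s, v s) ∈ A.graph) :
    (∫ s in a..b, u s, ∫ s in a..b, v s) ∈ A.graph := by
  have huv : IntervalIntegrable (fun s => (u s, v s)) volume a b :=
    ⟨hu.1.prodMk hv.1, hu.2.prodMk hv.2⟩
  have h_pair : (∫ s in a..b, u s, ∫ s in a..b, v s) = ∫ s in a..b, (u s, v s) :=
    Prod.ext ((ContinuousLinearMap.fst 𝕜 E F).intervalIntegral_comp_comm huv)
      ((ContinuousLinearMap.snd 𝕜 E F).intervalIntegral_comp_comm huv)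
  exact h_pair ▸ intervalIntegral_mem_of_isClosed hA huv h

end ClosedOperators

section FractionalIntegral

variable {E : Type*} [NormedAddCommGroup E] [NormedSpace ℝ E] {β r t : ℝ} {h : ℝ → E}

lemma integral_integral_swap_of_le {F : ℝ → ℝ → E} {a b : ℝ} (hab : a ≤ b)
    (hF : IntegrableOn F.uncurry {p | a < p.2 ∧ p.2 ≤ p.1 ∧ p.1 ≤ b}) :
    ∫ s in a..b, ∫ v in a..s, F s v = ∫ v in a..b, ∫ s in v..b, F s v := by
  let Δ : Set (ℝ × ℝ) := {p | a < p.2 ∧ p.2 ≤ p.1 ∧ p.1 ≤ b}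
  have hΔ : MeasurableSet Δ := by measurability
  have h_rows : ∀ s, ∫ v, Δ.indicator F.uncurry (s, v) =
      (Ioc a b).indicator (fun s => ∫ v in a..s, F s v) s := by
    intro s
    by_cases hs : s ∈ Ioc a b
    · rw [indicator_of_mem hs, intervalIntegral.integral_of_le hs.1.le,
        ← integral_indicator measurableSet_Ioc]
      congr with v
      simp [Δ, indicator_apply, hs.2]
    · have hsv : ∀ v, (s, v) ∉ Δ := fun v hv => hs ⟨hv.1.trans_le hv.2.1, hv.2.2⟩
      simp [hs, hsv]
  have h_columns : ∀ v, ∫ s, Δ.indicator F.uncurry (s, v) =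
      (Ioc a b).indicator (fun v => ∫ s in v..b, F s v) v := by
    intro v
    by_cases hv : v ∈ Ioc a b
    · rw [indicator_of_mem hv, intervalIntegral.integral_of_le hv.2, ← integral_Icc_eq_integral_Ioc,
        ← integral_indicator measurableSet_Icc]
      congr with s
      simp [Δ, indicator_apply, hv.1]
    · have hsv : ∀ s, (s, v) ∉ Δ := fun s hs => hv ⟨hs.1, hs.2.1.trans hs.2.2⟩
      simp [hv, hsv]
  rw [intervalIntegral.integral_of_le hab, intervalIntegral.integral_of_le hab,
    ← integral_indicator measurableSet_Ioc, ← integral_indicator measurableSet_Ioc]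
  simp_rw [← h_rows, ← h_columns]
  exact integral_integral_swap ((integrable_indicator_iff hΔ).2 hF)

/-- The Riemann–Liouville fractional integral `(g_β * h)(t)` of order `β`, based at `0`. -/
noncomputable def fractionalIntegral (β : ℝ) (h : ℝ → E) (t : ℝ) : E :=
  ∫ s in (0 : ℝ)..t, g β (t - s) • h s

lemma intervalIntegrable_g (hβ : 0 < β) (a b : ℝ) : IntervalIntegrable (g β) volume a b :=
  (intervalIntegral.intervalIntegrable_rpow' (by linarith)).div_const _

lemma integral_g (hβ : 0 < β) (t : ℝ) : ∫ s in (0 : ℝ)..t, g β s = g (β + 1) t := by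
  simp only [g]
  rw [intervalIntegral.integral_div, integral_rpow (Or.inl (by linarith)), sub_add_cancel,
    Real.zero_rpow hβ.ne', Real.Gamma_add_one hβ.ne', sub_zero, div_div, add_sub_cancel_right]

lemma g_mul (β : ℝ) {c s : ℝ} (hc : 0 ≤ c) (hs : 0 ≤ s) : g β (c * s) = c ^ (β - 1) * g β s := by
  simp only [g, Real.mul_rpow hc hs, mul_div_assoc]

lemma intervalIntegrable_g_sub (hβ : 0 < β) (t : ℝ) :
    IntervalIntegrable (fun s => g β (t - s)) volume 0 t := by
  simpa using ((intervalIntegrable_g hβ 0 t).comp_sub_left t).symm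

lemma intervalIntegrable_g_sub_smul (hβ : 0 < β) (ht : 0 ≤ t) (hh : ContinuousOn h (Icc 0 t)) :
    IntervalIntegrable (fun s => g β (t - s) • h s) volume 0 t :=
  (intervalIntegrable_g_sub hβ t).smul_continuousOn (by rwa [uIcc_of_le ht])

-- On the fixed interval `[0, 1]` the singularity of the kernel no longer moves with `t`, so that
-- dominated convergence applies.
lemma fractionalIntegral_eq_rpow_smul (hβ : 0 < β) (h : ℝ → E) (ht : 0 ≤ t) :
    fractionalIntegral β h t = t ^ β • ∫ v in (0 : ℝ)..1, g β (1 - v) • h (t * v) := by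
  rcases ht.eq_or_lt with rfl | ht
  · simp [fractionalIntegral, hβ.ne']
  · have h_homogeneous : EqOn (fun v => t ^ (β - 1) • (g β (1 - v) • h (t * v)))
        (fun v => g β (t - t * v) • h (t * v)) (uIcc 0 1) := by
      intro v hv
      rw [uIcc_of_le zero_le_one] at hv
      dsimp only
      rw [smul_smul, ← g_mul β ht.le (sub_nonneg.2 hv.2), mul_sub, mul_one]
    calc fractionalIntegral β h t
        = t • ∫ v in (0 : ℝ)..1, g β (t - t * v) • h (t * v) := by
          simpa [fractionalIntegral] using
            (intervalIntegral.smul_integral_comp_mul_left (fun s => g β (t - s) • h s) t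
              (a := 0) (b := 1)).symm
      _ = t ^ β • ∫ v in (0 : ℝ)..1, g β (1 - v) • h (t * v) := by
          rw [← intervalIntegral.integral_congr h_homogeneous, intervalIntegral.integral_smul,
            smul_smul, Real.rpow_sub_one ht.ne', mul_div_cancel₀ _ ht.ne']

lemma continuousOn_integral_smul_comp_mul {k : ℝ → ℝ} (hk : IntervalIntegrable k volume 0 1)
    (hh : ContinuousOn h (Icc 0 r)) :
    ContinuousOn (fun t => ∫ v in (0 : ℝ)..1, k v • h (t * v)) (Icc 0 r) := by
  obtain ⟨C, hC⟩ := isCompact_Icc.exists_bound_of_continuousOn hh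
  have h_mem : ∀ t ∈ Icc 0 r, ∀ v ∈ Icc (0 : ℝ) 1, t * v ∈ Icc 0 r := fun t ht v hv =>
    ⟨mul_nonneg ht.1 hv.1, (mul_le_of_le_one_right ht.1 hv.2).trans ht.2⟩
  intro t₀ ht₀
  apply intervalIntegral.continuousWithinAt_of_dominated_interval
    (bound := fun v => ‖k v‖ * C) (bound_integrable := hk.norm.mul_const C)
  · filter_upwards [self_mem_nhdsWithin] with t ht
    have h_scaled : ContinuousOn (fun v => h (t * v)) (uIcc 0 1) := by
      rw [uIcc_of_le zero_le_one]
      exact hh.comp (by fun_prop) (h_mem t ht)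
    exact (intervalIntegrable_iff.1 (hk.smul_continuousOn h_scaled)).aestronglyMeasurable
  · filter_upwards [self_mem_nhdsWithin] with t ht
    refine .of_forall fun v hv => ?_
    rw [uIoc_of_le zero_le_one] at hv
    rw [norm_smul]
    gcongr
    exact hC _ (h_mem t ht v (Ioc_subset_Icc_self hv))
  · refine .of_forall fun v hv => ?_
    rw [uIoc_of_le zero_le_one] at hv
    have h_maps : MapsTo (· * v) (Icc 0 r) (Icc 0 r) := fun t ht =>
      h_mem t ht v (Ioc_subset_Icc_self hv)
    exact (hh.comp (by fun_prop) h_maps t₀ ht₀).const_smul _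

lemma continuousOn_fractionalIntegral (hβ : 0 < β) (hh : ContinuousOn h (Icc 0 r)) :
    ContinuousOn (fractionalIntegral β h) (Icc 0 r) := by
  have h_rpow : Continuous fun t : ℝ => t ^ β := Real.continuous_rpow_const hβ.le
  have h_rescaled := continuousOn_integral_smul_comp_mul (intervalIntegrable_g_sub hβ 1) hh
  exact (h_rpow.continuousOn.smul h_rescaled).congr fun t ht =>
    fractionalIntegral_eq_rpow_smul hβ h ht.1

lemma integrableOn_g_sub_smul (hβ : 0 < β) (ht : 0 ≤ t) (hh : ContinuousOn h (Icc 0 t)) :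
    IntegrableOn (fun p : ℝ × ℝ => g β (p.1 - p.2) • h p.2)
      {p | 0 < p.2 ∧ p.2 ≤ p.1 ∧ p.1 ≤ t} := by
  have hg_int : Integrable ((Icc 0 t).indicator (g β)) :=
    (integrable_indicator_iff measurableSet_Icc).2
      ((intervalIntegrable_iff_integrableOn_Icc_of_le ht).1 (intervalIntegrable_g hβ 0 t))
  have hh_int : Integrable ((Icc 0 t).indicator h) :=
    (integrable_indicator_iff measurableSet_Icc).2 hh.integrableOn_Icc
  refine (hh_int.convolution_integrand (ContinuousLinearMap.lsmul ℝ ℝ).flip hg_int).integrableOn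
    |>.congr_fun (fun p hp => ?_) (by measurability)
  have h_fst : p.1 - p.2 ∈ Icc 0 t := ⟨by linarith [hp.2.1], by linarith [hp.1, hp.2.2]⟩
  have h_snd : p.2 ∈ Icc 0 t := ⟨hp.1.le, hp.2.1.trans hp.2.2⟩
  simp [h_fst, h_snd]

lemma integral_fractionalIntegral [CompleteSpace E] (hβ : 0 < β) (ht : 0 ≤ t)
    (hh : ContinuousOn h (Icc 0 t)) :
    ∫ s in (0 : ℝ)..t, fractionalIntegral β h s = fractionalIntegral (β + 1) h t := by
  calc ∫ s in (0 : ℝ)..t, fractionalIntegral β h s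
      = ∫ v in (0 : ℝ)..t, ∫ s in v..t, g β (s - v) • h v :=
        integral_integral_swap_of_le ht (integrableOn_g_sub_smul hβ ht hh)
    _ = fractionalIntegral (β + 1) h t := by
        refine intervalIntegral.integral_congr fun v _ => ?_
        rw [intervalIntegral.integral_smul_const, intervalIntegral.integral_comp_sub_right (g β),
          sub_self, integral_g hβ]

lemma exists_clm_eq_fractionalIntegral {𝕜 E F : Type*} [NontriviallyNormedField 𝕜]
    [NormedAddCommGroup E] [NormedSpace 𝕜 E] [CompleteSpace E] [NormedAddCommGroup F]
    [NormedSpace 𝕜 F] [NormedSpace ℝ F] [SMulCommClass ℝ 𝕜 F] {S : ℝ → E →L[𝕜] F}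
    (hβ : 0 < β) (ht : 0 ≤ t) (hS : ∀ x, ContinuousOn (fun s => S s x) (Icc 0 t)) :
    ∃ L : E →L[𝕜] F, ∀ x, L x = fractionalIntegral β (fun s => S s x) t := by
  obtain ⟨C, hC⟩ := exists_norm_le_of_continuousOn_apply isCompact_Icc hS
  have := SMulCommClass.symm ℝ 𝕜 F
  refine exists_clm_eq_intervalIntegral (P := fun s => g β (t - s) • S s)
    (φ := fun s => ‖g β (t - s)‖ * C)
    (fun x => intervalIntegrable_g_sub_smul hβ ht (hS x))
    ((intervalIntegrable_g_sub hβ t).norm.mul_const C) fun s hs => ?_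
  rw [uIoc_of_le ht] at hs
  rw [norm_smul]
  gcongr
  exact hC s (Ioc_subset_Icc_self hs)

end FractionalIntegral

section Ramps

lemma continuous_sub_apply_projIcc {E : Type*} [NormedAddCommGroup E] {a b : ℝ} (hab : a ≤ b)
    {v : ℝ → E} (hv : ContinuousOn v (Icc a b)) :
    Continuous fun τ => v b - v (projIcc a b hab τ) :=
  continuous_const.sub hv.domRestrict.Icc_extend'

variable {E : Type*} [NormedAddCommGroup E] [NormedSpace ℝ E]

/-- The continuous approximation of the indicator of `(d, ∞)` which is `0` up to `d`, is `1` from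
`d + ε` on and is affine in between; it is meant for `ε > 0`. -/
noncomputable def ramp (ε d : ℝ) : ℝ →ᵇ ℝ :=
  .ofNormedAddCommGroup (fun s => max 0 (min 1 ((s - d) / ε))) (by fun_prop) 1 fun s => by
    rw [Real.norm_of_nonneg (le_max_left _ _)]
    exact max_le zero_le_one (min_le_left _ _)

lemma ramp_apply (ε d s : ℝ) : ramp ε d s = max 0 (min 1 ((s - d) / ε)) := rfl

lemma ramp_nonneg (ε d s : ℝ) : 0 ≤ ramp ε d s := le_max_left _ _

lemma ramp_le_one (ε d s : ℝ) : ramp ε d s ≤ 1 := max_le zero_le_one (min_le_left _ _)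

lemma ramp_le_ramp {ε d d' : ℝ} (hε : 0 < ε) (hd : d ≤ d') (s : ℝ) : ramp ε d' s ≤ ramp ε d s := by
  simp only [ramp_apply]
  gcongr

lemma ramp_eq_inv_mul_sub {ε : ℝ} (hε : 0 < ε) (d s : ℝ) :
    ramp ε d s = ε⁻¹ * (max 0 (s - d) - max 0 (s - (d + ε))) := by
  rw [eq_inv_mul_iff_mul_eq₀ hε.ne', ramp_apply, mul_max_of_nonneg _ _ hε.le,
    mul_min_of_nonneg _ _ hε.le, mul_div_cancel₀ _ hε.ne', mul_zero, mul_one]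
  grind

lemma norm_sum_ramp_sub_smul_le_one {ε : ℝ} (hε : 0 < ε) {n : ℕ} {d : ℕ → ℝ}
    (hd : ∀ i < n, d i ≤ d (i + 1)) {x : ℕ → E} (hx : ∀ i, ‖x i‖ ≤ 1) :
    ‖∑ i ∈ Finset.range n, (ramp ε (d i) - ramp ε (d (i + 1))) • (.const ℝ (x i) : ℝ →ᵇ E)‖
      ≤ 1 := by
  refine (BoundedContinuousFunction.norm_le zero_le_one).2 fun s => ?_
  have h_term : ∀ i ∈ Finset.range n, ‖(ramp ε (d i) s - ramp ε (d (i + 1)) s) • x i‖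
      ≤ ramp ε (d i) s - ramp ε (d (i + 1)) s := by
    intro i hi
    have h_nonneg := sub_nonneg.2 (ramp_le_ramp hε (hd i (Finset.mem_range.1 hi)) s)
    rw [norm_smul, Real.norm_of_nonneg h_nonneg]
    exact mul_le_of_le_one_right h_nonneg (hx i)
  rw [BoundedContinuousFunction.sum_apply]
  calc ‖∑ i ∈ Finset.range n, (ramp ε (d i) s - ramp ε (d (i + 1)) s) • x i‖
      ≤ ∑ i ∈ Finset.range n, (ramp ε (d i) s - ramp ε (d (i + 1)) s) := norm_sum_le_of_le _ h_term
    _ = ramp ε (d 0) s - ramp ε (d n) s := Finset.sum_range_sub' (fun i => ramp ε (d i) s) n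
    _ ≤ 1 := (sub_le_self _ (ramp_nonneg _ _ _)).trans (ramp_le_one _ _ _)

lemma integral_max_sub_smul [CompleteSpace E] {p : ℝ → E} {a b d : ℝ}
    (hp : ContinuousOn p (Icc a b)) (hd : d ∈ Icc a b) :
    ∫ s in a..b, max 0 (s - d) • p s = ∫ τ in d..b, ∫ s in τ..b, p s := by
  have hp_int : IntegrableOn (fun q : ℝ × ℝ => p q.1) {q | d < q.2 ∧ q.2 ≤ q.1 ∧ q.1 ≤ b} := by
    have h_square : IntegrableOn (fun q : ℝ × ℝ => p q.1) (Icc d b ×ˢ Icc d b) := by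
      rw [IntegrableOn, Measure.volume_eq_prod, ← Measure.prod_restrict]
      exact (hp.mono (Icc_subset_Icc_left hd.1)).integrableOn_Icc.comp_fst _
    exact h_square.mono_set fun q hq =>
      ⟨⟨hq.1.le.trans hq.2.1, hq.2.2⟩, hq.1.le, hq.2.1.trans hq.2.2⟩
  have h_int : ContinuousOn (fun s => max 0 (s - d) • p s) (Icc a b) :=
    ContinuousOn.smul (by fun_prop) hp
  have h_left : ∫ s in a..d, max 0 (s - d) • p s = 0 :=
    intervalIntegral.integral_zero_ae (.of_forall fun s hs => by
      rw [uIoc_of_le hd.1] at hs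
      rw [max_eq_left (sub_nonpos.2 hs.2), zero_smul])
  have h_right : ∫ s in d..b, max 0 (s - d) • p s = ∫ s in d..b, ∫ _τ in d..s, p s :=
    intervalIntegral.integral_congr fun s hs => by
      rw [uIcc_of_le hd.2] at hs
      simp [hs.1]
  rw [← intervalIntegral.integral_add_adjacent_intervals (b := d), h_left, zero_add, h_right,
    integral_integral_swap_of_le (F := fun s _ => p s) hd.2 hp_int]
  · exact (h_int.mono (by rw [uIcc_of_le hd.1]; exact Icc_subset_Icc_right hd.2)).intervalIntegrable
  · exact (h_int.mono (by rw [uIcc_of_le hd.2]; exact Icc_subset_Icc_left hd.1)).intervalIntegrable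

lemma tendsto_inv_smul_integral_right [CompleteSpace E] {v : ℝ → E} (hv : Continuous v) (d : ℝ) :
    Filter.Tendsto (fun ε : ℝ => ε⁻¹ • ∫ τ in d..d + ε, v τ) (𝓝[>] 0) (𝓝 (v d)) := by
  simpa using (hv.integral_hasStrictDerivAt d d).hasDerivAt.tendsto_slope_zero_right

end Ramps

section BoundedSemivariation

variable {X : Type*} [NormedAddCommGroup X] [NormedSpace ℂ X] {A : X →ₗ.[ℂ] X}
  {P S : ℝ → X →L[ℂ] X} {r d ε : ℝ}

lemma integral_tail_mem_graph (hP : ∀ x, ContinuousOn (fun t => P t x) (Icc 0 r))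
    (hPS : ∀ t ∈ Icc 0 r, ∀ x, (∫ s in (0 : ℝ)..t, P s x, S t x - x) ∈ A.graph)
    {τ : ℝ} (hτ : τ ∈ Icc 0 r) (x : X) :
    (∫ s in τ..r, P s x, S r x - S τ x) ∈ A.graph := by
  have hr : 0 ≤ r := hτ.1.trans hτ.2
  have h_int : ∀ t ∈ Icc 0 r, IntervalIntegrable (fun s => P s x) volume 0 t := fun t ht =>
    ((hP x).mono (Icc_subset_Icc_right ht.2)).intervalIntegrable_of_Icc ht.1
  have h_sub := A.graph.sub_mem (hPS r ⟨hr, le_rfl⟩ x) (hPS τ hτ x)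
  rwa [Prod.mk_sub_mk, sub_sub_sub_cancel_right,
    intervalIntegral.integral_interval_sub_left (h_int r ⟨hr, le_rfl⟩) (h_int τ hτ)] at h_sub

variable [CompleteSpace X]

lemma integral_max_sub_smul_mem_graph (hA : A.IsClosed) (hr : 0 ≤ r)
    (hP : ∀ x, ContinuousOn (fun t => P t x) (Icc 0 r))
    (hS : ∀ x, ContinuousOn (fun t => S t x) (Icc 0 r))
    (hPS : ∀ t ∈ Icc 0 r, ∀ x, (∫ s in (0 : ℝ)..t, P s x, S t x - x) ∈ A.graph)
    (hd : 0 ≤ d) (x : X) :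
    (∫ s in (0 : ℝ)..r, max 0 (s - d) • P s x, ∫ τ in d..r, (S r x - S (projIcc 0 r hr τ) x))
      ∈ A.graph := by
  rcases le_total d r with hdr | hrd
  · have hu : ContinuousOn (fun τ => ∫ s in τ..r, P s x) (uIcc d r) := by
      refine intervalIntegral.continuousOn_primitive_interval_left ?_
      rw [uIcc_of_le hdr]
      exact ((hP x).mono (Icc_subset_Icc_left hd)).integrableOn_Icc
    rw [integral_max_sub_smul (hP x) ⟨hd, hdr⟩]
    refine intervalIntegral_mem_graph hA hu.intervalIntegrable
      ((continuous_sub_apply_projIcc hr (hS x)).intervalIntegrable d r) fun τ hτ => ?_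
    rw [uIoc_of_le hdr] at hτ
    have hτr : τ ∈ Icc 0 r := ⟨hd.trans hτ.1.le, hτ.2⟩
    rw [projIcc_of_mem hr hτr]
    exact integral_tail_mem_graph hP hPS hτr x
  · have h_fst : ∫ s in (0 : ℝ)..r, max 0 (s - d) • P s x = 0 :=
      intervalIntegral.integral_zero_ae (.of_forall fun s hs => by
        rw [uIoc_of_le hr] at hs
        rw [max_eq_left (sub_nonpos.2 (hs.2.trans hrd)), zero_smul])
    have h_snd : ∫ τ in d..r, (S r x - S (projIcc 0 r hr τ) x) = 0 :=
      intervalIntegral.integral_zero_ae (.of_forall fun τ hτ => by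
        rw [uIoc_of_ge hrd] at hτ
        rw [projIcc_of_right_le hr hτ.1.le, sub_self])
    rw [h_fst, h_snd]
    exact A.graph.zero_mem

lemma apply_ramp_smul_const_eq (hA : A.IsClosed) (hr : 0 ≤ r)
    (hP : ∀ x, ContinuousOn (fun t => P t x) (Icc 0 r))
    (hS : ∀ x, ContinuousOn (fun t => S t x) (Icc 0 r))
    (hPS : ∀ t ∈ Icc 0 r, ∀ x, (∫ s in (0 : ℝ)..t, P s x, S t x - x) ∈ A.graph)
    {T : (ℝ →ᵇ X) → X} (hT : ∀ f, (∫ s in (0 : ℝ)..r, P s (f s), T f) ∈ A.graph)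
    (hε : 0 < ε) (hd : 0 ≤ d) (x : X) :
    T (ramp ε d • .const ℝ x) = ε⁻¹ • ∫ τ in d..d + ε, (S r x - S (projIcc 0 r hr τ) x) := by
  have hv := continuous_sub_apply_projIcc hr (hS x)
  have h_int : ∀ c, IntervalIntegrable (fun s => max 0 (s - c) • P s x) volume 0 r := fun c =>
    have h_max : ContinuousOn (fun s => max 0 (s - c)) (Icc 0 r) := by fun_prop
    (h_max.smul (hP x)).intervalIntegrable_of_Icc hr
  have h_graph := A.graph.smul_of_tower_mem ε⁻¹ (A.graph.sub_mem
    (integral_max_sub_smul_mem_graph hA hr hP hS hPS hd x)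
    (integral_max_sub_smul_mem_graph hA hr hP hS hPS (add_nonneg hd hε.le) x))
  rw [Prod.mk_sub_mk, Prod.smul_mk, intervalIntegral.integral_interval_sub_interval_comm
    (hv.intervalIntegrable _ _) (hv.intervalIntegrable _ _) (hv.intervalIntegrable _ _),
    intervalIntegral.integral_same, sub_zero] at h_graph
  refine A.mem_graph_snd_inj (hT _) h_graph ?_
  rw [← intervalIntegral.integral_sub (h_int _) (h_int _), ← intervalIntegral.integral_smul]
  refine intervalIntegral.integral_congr fun s _ => ?_
  calc P s (ramp ε d s • x) = ramp ε d s • P s x := (P s).map_smul_of_tower _ _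
    _ = ε⁻¹ • (max 0 (s - d) • P s x - max 0 (s - (d + ε)) • P s x) := by
      rw [ramp_eq_inv_mul_sub hε, mul_smul, sub_smul]

lemma tendsto_apply_ramp_smul_const (hA : A.IsClosed)
    (hP : ∀ x, ContinuousOn (fun t => P t x) (Icc 0 r))
    (hS : ∀ x, ContinuousOn (fun t => S t x) (Icc 0 r))
    (hPS : ∀ t ∈ Icc 0 r, ∀ x, (∫ s in (0 : ℝ)..t, P s x, S t x - x) ∈ A.graph)
    {T : (ℝ →ᵇ X) → X} (hT : ∀ f, (∫ s in (0 : ℝ)..r, P s (f s), T f) ∈ A.graph)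
    (hd : d ∈ Icc 0 r) (x : X) :
    Filter.Tendsto (fun ε => T (ramp ε d • .const ℝ x)) (𝓝[>] 0) (𝓝 (S r x - S d x)) := by
  have hr : 0 ≤ r := hd.1.trans hd.2
  have h_lim := tendsto_inv_smul_integral_right (continuous_sub_apply_projIcc hr (hS x)) d
  rw [projIcc_of_mem hr hd] at h_lim
  refine h_lim.congr' ?_
  filter_upwards [self_mem_nhdsWithin] with ε hε
  exact (apply_ramp_smul_const_eq hA hr hP hS hPS hT hε hd.1 x).symm

lemma boundedSemivariation_of_integral_mem_graph (hA : A.IsClosed)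
    (hP : ∀ x, ContinuousOn (fun t => P t x) (Icc 0 r))
    (hS : ∀ x, ContinuousOn (fun t => S t x) (Icc 0 r))
    (hPS : ∀ t ∈ Icc 0 r, ∀ x, (∫ s in (0 : ℝ)..t, P s x, S t x - x) ∈ A.graph)
    (T : (ℝ →ᵇ X) →L[ℂ] X) (hT : ∀ f, (∫ s in (0 : ℝ)..r, P s (f s), T f) ∈ A.graph) :
    BoundedSemivariation S r := by
  refine ⟨‖T‖, fun n d x h0 hn hlt hx => ?_⟩
  have h_mono : StrictMonoOn d (Iic n) := strictMonoOn_Iic_of_lt_succ hlt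
  have h_mem : ∀ i ≤ n, d i ∈ Icc 0 r := fun i hi =>
    ⟨h0 ▸ h_mono.monotoneOn n.zero_le hi i.zero_le, hn ▸ h_mono.monotoneOn hi self_mem_Iic hi⟩
  let step (ε : ℝ) : ℝ →ᵇ X :=
    ∑ i ∈ Finset.range n, (ramp ε (d i) - ramp ε (d (i + 1))) • .const ℝ (x i)
  have h_lim : Filter.Tendsto (fun ε => T (step ε)) (𝓝[>] 0)
      (𝓝 (∑ i ∈ Finset.range n, (S (d (i + 1)) - S (d i)) (x i))) := by
    simp only [step, map_sum, sub_smul, map_sub, sub_apply]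
    refine tendsto_finsetSum _ fun i hi => ?_
    have hi := Finset.mem_range.1 hi
    convert (tendsto_apply_ramp_smul_const hA hP hS hPS hT (h_mem i hi.le) (x i)).sub
      (tendsto_apply_ramp_smul_const hA hP hS hPS hT (h_mem (i + 1) hi) (x i)) using 2
    abel
  refine le_of_tendsto h_lim.norm ?_
  filter_upwards [self_mem_nhdsWithin] with ε hε
  exact T.le_of_opNorm_le_of_le le_rfl
    (norm_sum_ramp_sub_smul_le_one hε (fun i hi => (hlt i hi).le) hx) |>.trans_eq (mul_one _)

lemma boundedSemivariation_of_integral_mem_domain (hA : A.IsClosed) (hr : 0 ≤ r)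
    (hP : ∀ x, ContinuousOn (fun t => P t x) (Icc 0 r))
    (hS : ∀ x, ContinuousOn (fun t => S t x) (Icc 0 r))
    (hPS : ∀ t ∈ Icc 0 r, ∀ x, (∫ s in (0 : ℝ)..t, P s x, S t x - x) ∈ A.graph)
    (h_dom : ∀ f, ContinuousOn f (Icc 0 r) → ∫ s in (0 : ℝ)..r, P s (f s) ∈ A.domain) :
    BoundedSemivariation S r := by
  obtain ⟨C, hC⟩ := exists_norm_le_of_continuousOn_apply isCompact_Icc hP
  obtain ⟨K, hK⟩ : ∃ K : (ℝ →ᵇ X) →L[ℂ] X, ∀ f, K f = ∫ s in (0 : ℝ)..r, P s (f s) := by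
    refine exists_clm_eq_intervalIntegral (φ := fun _ => C)
      (P := fun s => P s ∘L BoundedContinuousFunction.evalCLM ℂ s) (fun f => ?_)
      intervalIntegrable_const fun s hs => ?_
    · exact (continuousOn_apply_of_continuousOn_apply_const isCompact_Icc hP
        f.continuous.continuousOn).intervalIntegrable_of_Icc hr
    · rw [uIoc_of_le hr] at hs
      have hs := Ioc_subset_Icc_self hs
      refine ContinuousLinearMap.opNorm_le_bound _ ((norm_nonneg _).trans (hC s hs)) fun f => ?_
      exact (P s).le_of_opNorm_le_of_le (hC s hs) (f.norm_coe_le_norm s)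
  obtain ⟨T, hT⟩ := exists_clm_mem_graph hA K fun f => hK f ▸ h_dom f f.continuous.continuousOn
  exact boundedSemivariation_of_integral_mem_graph hA hP hS hPS T fun f => hK f ▸ hT f

end BoundedSemivariation

section ResolventFamilies

variable {X : Type*} [NormedAddCommGroup X] [NormedSpace ℂ X] {A : X →ₗ.[ℂ] X}

lemma IsStrongSolution.mem_domain {α r : ℝ} {f u : ℝ → X} {x y : X}
    (hu : IsStrongSolution α A r f x y u) {t : ℝ} (ht : t ∈ Icc 0 r) : u t ∈ A.domain := by
  obtain ⟨Au, _, _, _, _, h_graph, -⟩ := hu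
  exact A.mem_domain_of_mem_graph (h_graph t ht)

variable [CompleteSpace X] {S : ℝ → X →L[ℂ] X} {α : ℝ}

lemma fractionalIntegral_mem_graph (hα : 0 < α) (hA : A.IsClosed)
    (hA_dense : Dense (A.domain : Set X))
    (hS_cont : ∀ x, ContinuousOn (fun t => S t x) (Ici 0))
    (hS_comm : ∀ t, 0 ≤ t → ∀ x y, (x, y) ∈ A.graph → (S t x, S t y) ∈ A.graph)
    (hS_eq : ∀ t, 0 ≤ t → ∀ x y, (x, y) ∈ A.graph →
      S t x = x + fractionalIntegral α (fun s => S s y) t)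
    {t : ℝ} (ht : 0 ≤ t) (x : X) :
    (fractionalIntegral α (fun s => S s x) t, S t x - x) ∈ A.graph := by
  have hS_Icc : ∀ x, ContinuousOn (fun s => S s x) (Icc 0 t) := fun x =>
    (hS_cont x).mono Icc_subset_Ici_self
  obtain ⟨J, hJ⟩ := exists_clm_eq_fractionalIntegral hα ht hS_Icc
  have h_closed : IsClosed {x | (J x, S t x - x) ∈ A.graph} := hA.preimage (by fun_prop)
  have h_domain : (A.domain : Set X) ⊆ {x | (J x, S t x - x) ∈ A.graph} := by
    intro x hx
    obtain ⟨y, hxy⟩ := A.mem_domain_iff.1 hx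
    have h_diff : S t x - x = J y := by rw [hJ, hS_eq t ht x y hxy, add_sub_cancel_left]
    rw [mem_ofPred_eq, h_diff, hJ, hJ]
    refine intervalIntegral_mem_graph hA (intervalIntegrable_g_sub_smul hα ht (hS_Icc x))
      (intervalIntegrable_g_sub_smul hα ht (hS_Icc y)) fun s hs => ?_
    rw [uIoc_of_le ht] at hs
    exact A.graph.smul_of_tower_mem (g α (t - s)) (hS_comm s hs.1.le x y hxy)
  exact hJ x ▸ h_closed.closure_subset_iff.2 h_domain (hA_dense x)

theorem stmt_15_general (hα : 1 < α) (hA : A.IsClosed) (hA_dense : Dense (A.domain : Set X))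
    (hS_cont : ∀ x, ContinuousOn (fun t => S t x) (Ici 0))
    (hS_comm : ∀ t, 0 ≤ t → ∀ x y, (x, y) ∈ A.graph → (S t x, S t y) ∈ A.graph)
    (hS_eq : ∀ t, 0 ≤ t → ∀ x y, (x, y) ∈ A.graph →
      S t x = x + ∫ s in (0 : ℝ)..t, g α (t - s) • S s y)
    {r : ℝ} (hr : 0 ≤ r)
    (h_dom : ∀ f : ℝ → X, ContinuousOn f (Icc 0 r) →
      ∫ s in (0 : ℝ)..r, Pa α S (r - s) (f s) ∈ A.domain) :
    BoundedSemivariation S r := by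
  have hα' : 0 < α - 1 := sub_pos.2 hα
  have hS_Icc : ∀ t x, ContinuousOn (fun s => S s x) (Icc 0 t) := fun t x =>
    (hS_cont x).mono Icc_subset_Ici_self
  have hPa : ∀ t ∈ Icc 0 r, ∃ L : X →L[ℂ] X, ∀ x, L x = Pa α S t x := fun t ht =>
    exists_clm_eq_fractionalIntegral hα' ht.1 (hS_Icc t)
  choose! P hP using hPa
  refine boundedSemivariation_of_integral_mem_domain (A := A) (P := P) hA hr (fun x => ?_)
    (hS_Icc r) (fun t ht x => ?_) fun f hf => ?_
  · exact (continuousOn_fractionalIntegral hα' (hS_Icc r x)).congr fun t ht => hP t ht x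
  · have h_int : ∫ s in (0 : ℝ)..t, P s x = fractionalIntegral α (fun s => S s x) t := by
      rw [← sub_add_cancel α 1, ← integral_fractionalIntegral hα' ht.1 (hS_Icc t x)]
      refine intervalIntegral.integral_congr fun s hs => ?_
      rw [uIcc_of_le ht.1] at hs
      exact hP s ⟨hs.1, hs.2.trans ht.2⟩ x
    rw [h_int]
    exact fractionalIntegral_mem_graph (by linarith) hA hA_dense hS_cont hS_comm hS_eq ht.1 x
  · have h_refl : MapsTo (r - ·) (Icc 0 r) (Icc 0 r) := fun s hs =>
      ⟨sub_nonneg.2 hs.2, sub_le_self r hs.1⟩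
    have h_int : ∫ s in (0 : ℝ)..r, P s (f s) = ∫ s in (0 : ℝ)..r, Pa α S (r - s) (f (r - s)) := by
      rw [intervalIntegral.integral_comp_sub_left (fun s => Pa α S s (f s)), sub_self, sub_zero]
      refine intervalIntegral.integral_congr fun s hs => ?_
      rw [uIcc_of_le hr] at hs
      exact hP s hs (f s)
    exact h_int ▸ h_dom _ (hf.comp (by fun_prop) h_refl)

end ResolventFamilies

theorem stmt_15
    {X : Type*} [NormedAddCommGroup X] [NormedSpace ℂ X] [CompleteSpace X]
    (α : ℝ) (hα1 : 1 < α) (hα2 : α < 2)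
    (A : X →ₗ.[ℂ] X) (hA_closed : IsClosed (A.graph : Set (X × X)))
    (hA_dense : Dense (A.domain : Set X))
    (S : ℝ → X →L[ℂ] X)
    (hS_cont : ∀ x : X, ContinuousOn (fun t => S t x) (Ici (0:ℝ)))
    (hS_zero : S 0 = 1)
    (hS_dom : ∀ t : ℝ, 0 ≤ t → ∀ x ∈ A.domain, S t x ∈ A.domain)
    (hS_comm : ∀ t : ℝ, 0 ≤ t → ∀ x y : X, (x, y) ∈ A.graph → (S t x, S t y) ∈ A.graph)
    (hS_eq : ∀ t : ℝ, 0 ≤ t → ∀ x y : X, (x, y) ∈ A.graph →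
      S t x = x + ∫ s in (0:ℝ)..t, g α (t - s) • S s y)
    (r : ℝ) (hr : 0 < r)
    (hstrong : ∀ x ∈ A.domain, ∀ y ∈ A.domain, ∀ f : ℝ → X, ContinuousOn f (Icc 0 r) →
      IsStrongSolution α A r f x y
        (fun t => S t x + (∫ s in (0:ℝ)..t, S s y) +
          ∫ s in (0:ℝ)..t, Pa α S (t - s) (f s))) :
    BoundedSemivariation S r := by
  exact stmt_15_general hα1 hA_closed hA_dense hS_cont hS_comm hS_eq hr.le fun f hf => by
    simpa using (hstrong 0 A.domain.zero_mem 0 A.domain.zero_mem f hf).mem_domain ⟨hr.le, le_rfl⟩
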